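/- arXiv:2501.18773 — 8 statements merged into one kernel-verified Lean document; each statement's English description precedes it below -/
import Mathlib

section
/- Fix t ≥ 1 and γ ∈ [0,1). If a_t := γ A_{t−1}/(1 − γ) (so that a_t/A_t = γ) and x_{t+1} := (1 − γ)x_t + γ v_t, then the primal-dual gap satisfies G_t ≤ (1 − γ)G_{t−1} − γ⟨∇f(x_t), v_t − x_t⟩ − f(x_t) + f((1 − γ)x_t + γ v_t). Moreover, the map γ ↦ (1 − γ)G_{t−1} − γ⟨∇f(x_t), v_t − x_t⟩ − f(x_t) + f((1 − γ)x_t + γ v_t) is convex on [0,1]. -/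
open scoped RealInnerProductSpace

/-! The lower bound subtracted in the gap is a weighted mean of the values
`f (x i) + ⟪∇f (x i), v i - x i⟫`. Appending the weight `a t` with `a t / A t = γ` replaces this
mean by its convex combination, with coefficients `1 - γ` and `γ`, with the newest value, so the
gap bound is in fact an equality. As a function of `γ`, its right-hand side is `f` along the segment
from `x t` to `v t`, plus an affine function. -/

open Finset AffineMap

section WeightedMeans

variable {𝕜 V : Type*} [Field 𝕜] [AddCommGroup V] [Module 𝕜 V]

theorem eq_mul_add_of_eq_mul_div_one_sub {γ S w : 𝕜} (hγ : γ ≠ 1) (hw : w = γ * S / (1 - γ)) :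
    w = γ * (S + w) := by
  have hγ' : 1 - γ ≠ 0 := sub_ne_zero.mpr hγ.symm
  rw [hw]
  field_simp
  ring

theorem centerMass_range_succ_eq_lineMap {w : ℕ → 𝕜} (z : ℕ → V) {n : ℕ} {γ : 𝕜}
    (hS : ∑ i ∈ range n, w i ≠ 0) (hw : w n = γ * ∑ i ∈ range (n + 1), w i) :
    (range (n + 1)).centerMass w z = lineMap ((range n).centerMass w z) (z n) γ := by
  have hS_eq : ∑ i ∈ range n, w i = (1 - γ) * ∑ i ∈ range (n + 1), w i := by
    linear_combination -hw - sum_range_succ w n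
  have hS' : ∑ i ∈ range (n + 1), w i ≠ 0 := right_ne_zero_of_mul (hS_eq ▸ hS)
  have htotal : w n + ∑ i ∈ range n, w i = ∑ i ∈ range (n + 1), w i := by
    rw [sum_range_succ, add_comm]
  rw [range_add_one, centerMass_insert _ _ _ notMem_range_self hS, htotal,
    (div_eq_iff hS').mpr hw, (div_eq_iff hS').mpr hS_eq, lineMap_apply_module, add_comm]

/-- The primal-dual gap of a method with objective values `y i` and lower estimates `m i`, weighted
by `a i`. For Frank-Wolfe, `y i = f (x i)` and `m i = f (x i) + ⟪∇f (x i), v i - x i⟫`. The index is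
the last estimate used, so the objective value is taken one step later. -/
def primalDualGap (a y m : ℕ → 𝕜) (n : ℕ) : 𝕜 :=
  y (n + 1) - (range (n + 1)).centerMass a m

theorem primalDualGap_eq (a y m : ℕ → 𝕜) (n : ℕ) :
    primalDualGap a y m n =
      y (n + 1) - 1 / (∑ i ∈ range (n + 1), a i) * ∑ i ∈ range (n + 1), a i * m i := by
  simp only [primalDualGap, centerMass, smul_eq_mul, one_div]

theorem primalDualGap_succ {a : ℕ → 𝕜} (y m : ℕ → 𝕜) {n : ℕ} {γ : 𝕜}
    (hS : ∑ i ∈ range (n + 1), a i ≠ 0) (ha : a (n + 1) = γ * ∑ i ∈ range (n + 2), a i) :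
    primalDualGap a y m (n + 1) = (1 - γ) * primalDualGap a y m n
      - γ * (m (n + 1) - y (n + 1)) - y (n + 1) + y (n + 2) := by
  simp only [primalDualGap, centerMass_range_succ_eq_lineMap m hS ha, lineMap_apply_module,
    smul_eq_mul]
  ring

end WeightedMeans

section Convexity

variable {𝕜 E : Type*} [Field 𝕜] [LinearOrder 𝕜] [IsStrictOrderedRing 𝕜] [AddCommGroup E]
  [Module 𝕜 E]

theorem div_sum_range_succ_mem_Icc {a : ℕ → 𝕜} {n : ℕ} (ha : ∀ i ≤ n, 0 ≤ a i) :
    a n / ∑ i ∈ range (n + 1), a i ∈ Set.Icc (0 : 𝕜) 1 := by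
  have ha' : ∀ i ∈ range (n + 1), 0 ≤ a i := fun i hi => ha i (mem_range_succ_iff.mp hi)
  exact ⟨div_nonneg (ha n le_rfl) (sum_nonneg ha'),
    div_le_one_of_le₀ (single_le_sum ha' (self_mem_range_succ n)) (sum_nonneg ha')⟩

theorem mem_of_convex_combination_recursion {X : Set E} (hX : Convex 𝕜 X) {t : ℕ} {s : ℕ → 𝕜}
    {x v : ℕ → E} (hs : ∀ i < t, s i ∈ Set.Icc (0 : 𝕜) 1) (hv : ∀ i < t, v i ∈ X) (hx0 : x 0 ∈ X)
    (hx : ∀ i < t, x (i + 1) = (1 - s i) • x i + s i • v i) : x t ∈ X := by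
  induction t with
  | zero => exact hx0
  | succ n ih =>
    have hxn : x n ∈ X := ih (fun i hi => hs i (hi.trans n.lt_succ_self))
      (fun i hi => hv i (hi.trans n.lt_succ_self)) (fun i hi => hx i (hi.trans n.lt_succ_self))
    have hsn := hs n n.lt_succ_self
    rw [hx n n.lt_succ_self]
    exact hX hxn (hv n n.lt_succ_self) (sub_nonneg.mpr hsn.2) hsn.1 (sub_add_cancel _ _)

theorem convexOn_lineMap_add_comp_lineMap {X : Set E} {f : E → 𝕜} (hf : ConvexOn 𝕜 X f) {y z : E}
    (hy : y ∈ X) (hz : z ∈ X) (p q : 𝕜) :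
    ConvexOn 𝕜 (Set.Icc (0 : 𝕜) 1) (fun s => lineMap p q s + f (lineMap y z s)) := by
  have haffine : ConvexOn 𝕜 Set.univ (lineMap p q : 𝕜 → 𝕜) :=
    (convexOn_id convex_univ).comp_affineMap (lineMap p q)
  have hsegment : ConvexOn 𝕜 (Set.Icc (0 : 𝕜) 1) (fun s => f (lineMap y z s)) :=
    (hf.comp_affineMap (lineMap y z)).subset (fun _ hs => hf.1.lineMap_mem hy hz hs)
      (convex_Icc 0 1)
  exact (haffine.subset (Set.subset_univ _) (convex_Icc 0 1)).add hsegment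

-- `d i` takes the place of the inner product `⟪∇f (x i), v i - x i⟫`.
theorem fw_primal_dual_gap_bound_and_convexity_general {X : Set E} {f : E → 𝕜}
    (hf : ConvexOn 𝕜 X f) {t : ℕ} (ht : 1 ≤ t) {a A : ℕ → 𝕜} (ha : ∀ i < t, 0 < a i)
    (hA : ∀ n, A n = ∑ i ∈ range (n + 1), a i) {x v : ℕ → E} (hx0 : x 0 ∈ X)
    (hv : ∀ i ≤ t, v i ∈ X) (hx : ∀ i < t, x (i + 1) = (1 - a i / A i) • x i + (a i / A i) • v i)
    (d G : ℕ → 𝕜)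
    (hG : ∀ n, G n = f (x (n + 1)) - 1 / A n * ∑ i ∈ range (n + 1), a i * (f (x i) + d i))
    {γ : 𝕜} (hγ : γ ≠ 1) (hat : a t = γ * A (t - 1) / (1 - γ))
    (hxt : x (t + 1) = (1 - γ) • x t + γ • v t) :
    G t = (1 - γ) * G (t - 1) - γ * d t - f (x t) + f ((1 - γ) • x t + γ • v t) ∧
      ConvexOn 𝕜 (Set.Icc (0 : 𝕜) 1) (fun s =>
        (1 - s) * G (t - 1) - s * d t - f (x t) + f ((1 - s) • x t + s • v t)) := by
  obtain ⟨n, rfl⟩ := Nat.exists_eq_add_of_le' ht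
  rw [Nat.add_sub_cancel] at hat ⊢
  constructor
  · have hgap : ∀ k, G k = primalDualGap a (f ∘ x) (fun i => f (x i) + d i) k := fun k => by
      rw [hG, hA, primalDualGap_eq, Function.comp_apply]
    have hS : ∑ i ∈ range (n + 1), a i ≠ 0 :=
      (sum_pos (fun i hi => ha i (mem_range.mp hi)) nonempty_range_add_one).ne'
    have hweight : a (n + 1) = γ * ∑ i ∈ range (n + 2), a i := by
      rw [sum_range_succ, ← hA]
      exact eq_mul_add_of_eq_mul_div_one_sub hγ hat
    rw [hgap, hgap, primalDualGap_succ _ _ hS hweight, ← hxt]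
    simp only [Function.comp_apply, add_sub_cancel_left]
  · have hstep : ∀ i < n + 1, a i / A i ∈ Set.Icc (0 : 𝕜) 1 := fun i hi =>
      hA i ▸ div_sum_range_succ_mem_Icc fun j hj => (ha j (hj.trans_lt hi)).le
    have hxn : x (n + 1) ∈ X :=
      mem_of_convex_combination_recursion hf.1 hstep (fun i hi => hv i hi.le) hx0 hx
    refine (convexOn_lineMap_add_comp_lineMap hf hxn (hv _ le_rfl) (G n - f (x (n + 1)))
      (-d (n + 1) - f (x (n + 1)))).congr fun s _ => ?_
    simp only [lineMap_apply_module, smul_eq_mul]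
    ring

end Convexity

/-- Primal-dual gap bound for Frank-Wolfe with step `γ`, and convexity of the
line-search objective in `γ`. -/
theorem fw_primal_dual_gap_bound_and_convexity
    {E : Type*} [NormedAddCommGroup E] [InnerProductSpace ℝ E] [FiniteDimensional ℝ E]
    (X : Set E) (hXcompact : IsCompact X) (hXconv : Convex ℝ X)
    (U : Set E) (hUopen : IsOpen U) (hXU : X ⊆ U)
    (f : E → ℝ) (f' : E → E)
    (hfconv : ConvexOn ℝ X f)
    (hgrad : ∀ z ∈ U, HasGradientAt f (f' z) z)
    (t : ℕ) (ht : 1 ≤ t)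
    (a A : ℕ → ℝ) (hapos : ∀ ℓ < t, 0 < a ℓ)
    (hA : ∀ ℓ, A ℓ = ∑ i ∈ Finset.range (ℓ + 1), a i)
    (x v : ℕ → E) (hx0 : x 0 ∈ X)
    (hv : ∀ ℓ, v ℓ ∈ X ∧ ∀ w ∈ X, ⟪f' (x ℓ), v ℓ⟫ ≤ ⟪f' (x ℓ), w⟫)
    (hxrec : ∀ ℓ < t, x (ℓ + 1) = (1 - a ℓ / A ℓ) • x ℓ + (a ℓ / A ℓ) • v ℓ)
    (G : ℕ → ℝ)
    (hG : ∀ ℓ, G ℓ = f (x (ℓ + 1)) -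
      (1 / A ℓ) * ∑ i ∈ Finset.range (ℓ + 1), a i * (f (x i) + ⟪f' (x i), v i - x i⟫))
    (γ : ℝ) (hγ : γ ∈ Set.Ico (0 : ℝ) 1)
    (hat : a t = γ * A (t - 1) / (1 - γ))
    (hxt1 : x (t + 1) = (1 - γ) • x t + γ • v t) :
    (G t ≤ (1 - γ) * G (t - 1) - γ * ⟪f' (x t), v t - x t⟫ - f (x t)
        + f ((1 - γ) • x t + γ • v t)) ∧
      ConvexOn ℝ (Set.Icc (0 : ℝ) 1) (fun γ' : ℝ =>
        (1 - γ') * G (t - 1) - γ' * ⟪f' (x t), v t - x t⟫ - f (x t)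
          + f ((1 - γ') • x t + γ' • v t)) := by
  have h := fw_primal_dual_gap_bound_and_convexity_general hfconv ht hapos hA hx0
    (fun i _ => (hv i).1) hxrec (fun i => ⟪f' (x i), v i - x i⟫) G hG hγ.2.ne hat hxt1
  exact ⟨h.1.le, h.2⟩
end

section
/- Let L > 0 and D > 0, and let (G_t)_{t≥0} be a sequence of nonnegative reals with G_0 ≤ LD²/2 and, for all t ≥ 1, G_t ≤ (1 − (1/2)min{1, G_{t−1}/(LD²)}) G_{t−1}. Then G_t ≤ 4LD²/(t+2) for all t ≥ 0. -/
/-!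
After the rescaling `b t = G t / (2LD²)` the contraction becomes the logistic recursion
`b (t + 1) ≤ b t * (1 - b t)` as long as `b t ≤ 1 / 2`. The map `x ↦ x * (1 - x)` is increasing
on `x ≤ 1 / 2` and sends `1 / u` to `(u - 1) / u ^ 2 ≤ 1 / (u + 1)`, so each step adds at least `1`
to the denominator of a bound `b t ≤ 1 / u` with `u ≥ 2`.
-/

section LogisticRecursion

variable {𝕜 : Type*} [Field 𝕜] [LinearOrder 𝕜] [IsStrictOrderedRing 𝕜]

theorem mul_one_sub_le_mul_one_sub {R : Type*} [CommRing R] [PartialOrder R] [IsOrderedRing R]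
    {x y : R} (hxy : x ≤ y) (hsum : x + y ≤ 1) : x * (1 - x) ≤ y * (1 - y) := by
  have hfactor : y * (1 - y) - x * (1 - x) = (y - x) * (1 - (x + y)) := by ring
  rw [← sub_nonneg, hfactor]
  exact mul_nonneg (sub_nonneg.2 hxy) (sub_nonneg.2 hsum)

theorem one_div_mul_one_sub_one_div_le {u : 𝕜} (hu : 0 < u) :
    1 / u * (1 - 1 / u) ≤ 1 / (u + 1) := by
  have hdiff : 1 / (u + 1) - 1 / u * (1 - 1 / u) = 1 / (u ^ 2 * (u + 1)) := by
    field_simp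
    ring
  rw [← sub_nonneg, hdiff]
  positivity

theorem mul_one_sub_le_one_div_add_one {x u : 𝕜} (hu : 2 ≤ u) (hx : x ≤ 1 / u) :
    x * (1 - x) ≤ 1 / (u + 1) := by
  have hu_half : 1 / u ≤ 1 / 2 := one_div_le_one_div_of_le two_pos hu
  calc x * (1 - x) ≤ 1 / u * (1 - 1 / u) := mul_one_sub_le_mul_one_sub hx (by linarith)
    _ ≤ 1 / (u + 1) := one_div_mul_one_sub_one_div_le (two_pos.trans_le hu)

theorem le_one_div_add_of_le_mul_one_sub {b : ℕ → 𝕜} {s : 𝕜} (hs : 2 ≤ s) (h0 : b 0 ≤ 1 / s)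
    (hstep : ∀ t, b t ≤ 1 / 2 → b (t + 1) ≤ b t * (1 - b t)) (t : ℕ) :
    b t ≤ 1 / (t + s) := by
  induction t with
  | zero => simpa using h0
  | succ t ih =>
    have hden : 2 ≤ (t : 𝕜) + s := le_add_of_nonneg_of_le t.cast_nonneg hs
    have hhalf : b t ≤ 1 / 2 := ih.trans (one_div_le_one_div_of_le two_pos hden)
    calc b (t + 1) ≤ b t * (1 - b t) := hstep t hhalf
      _ ≤ 1 / (t + s + 1) := mul_one_sub_le_one_div_add_one hden ih
      _ = 1 / ((t + 1 : ℕ) + s) := by rw [Nat.cast_succ, add_right_comm]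

theorem pd_short_step_rate_general {G : ℕ → 𝕜} {C s : 𝕜} (hC : 0 < C) (hs : 2 ≤ s)
    (hG0 : G 0 ≤ 2 * C / s)
    (hrec : ∀ t, G (t + 1) ≤ (1 - 1 / 2 * min 1 (G t / C)) * G t) (t : ℕ) :
    G t ≤ 2 * C / (t + s) := by
  have h2C : 0 < 2 * C := mul_pos two_pos hC
  have hinit : G 0 / (2 * C) ≤ 1 / s := by
    rwa [div_le_iff₀ h2C, one_div_mul_eq_div]
  have hlogistic : ∀ t, G t / (2 * C) ≤ 1 / 2 →
      G (t + 1) / (2 * C) ≤ G t / (2 * C) * (1 - G t / (2 * C)) := by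
    intro t hhalf
    have hmin : min 1 (G t / C) = G t / C := by
      rw [div_le_iff₀ h2C] at hhalf
      exact min_eq_right ((div_le_one hC).2 (by linarith))
    calc G (t + 1) / (2 * C) ≤ (1 - 1 / 2 * (G t / C)) * G t / (2 * C) := by
          simpa only [hmin] using div_le_div_of_nonneg_right (hrec t) h2C.le
      _ = G t / (2 * C) * (1 - G t / (2 * C)) := by ring
  have hrate := le_one_div_add_of_le_mul_one_sub hs hinit hlogistic t
  rwa [div_le_iff₀ h2C, one_div_mul_eq_div] at hrate

end LogisticRecursion

/-- Contraction-to-rate conversion for the primal-dual short step: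
a nonnegative sequence satisfying the short-step contraction converges at rate
`4LD²/(t+2)`. -/
theorem pd_short_step_rate (L D : ℝ) (hL : 0 < L) (hD : 0 < D)
    (G : ℕ → ℝ) (hGnonneg : ∀ t, 0 ≤ G t)
    (hG0 : G 0 ≤ L * D ^ 2 / 2)
    (hrec : ∀ t, 1 ≤ t →
      G t ≤ (1 - (1 / 2) * min 1 (G (t - 1) / (L * D ^ 2))) * G (t - 1)) :
    ∀ t : ℕ, G t ≤ 4 * L * D ^ 2 / (t + 2) := by
  have hC : 0 < L * D ^ 2 := by positivity
  intro t
  calc G t ≤ 2 * (L * D ^ 2) / (t + 2) :=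
        pd_short_step_rate_general hC le_rfl (by linarith) (fun t => hrec (t + 1) t.succ_pos) t
    _ ≤ 4 * L * D ^ 2 / (t + 2) := by rw [mul_assoc 4]; gcongr; norm_num
end

section
/- Let L > 0, c > 0, 𝒢 ≥ 0, and A ≥ 0. Define φ : (0, ∞) → ℝ by φ(a) := 𝒢/(A + a) + c(−aA/(A + a) + a²L/2 − a²/(2(A + a))). Then φ is convex on (0, ∞), its derivative at a = 1/(2L) is nonpositive, and consequently every minimizer a* of φ over (0, ∞) satisfies a* ≥ 1/(2L). -/
/-!
Completing the square in `2 a A + a² = (A + a)² - A²` splits `φ`, up to an affine term, into a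
nonnegative multiple of `1 / (A + a)` and the quadratic `c L a² / 2`. Both are convex, and since the
first is decreasing, `φ'(a) ≤ c (L a - 1 / 2)`. The right-hand side vanishes at `1 / (2 L)` and is
negative to its left, where `φ` therefore has no critical point.
-/

open Set

/-- The per-iteration upper bound `φ(a)` on the primal-dual gap of gradient descent with step `a`,
where `L` is the smoothness constant, `c = ‖∇f(x_t)‖²`, `G` is the previous weighted gap
`𝒢_{t-1}` and `A` is the accumulated weight `A_{t-1}`. -/
noncomputable def gdGapBound (L c G A a : ℝ) : ℝ :=
  G / (A + a) + c * (-(a * A) / (A + a) + a ^ 2 * L / 2 - a ^ 2 / (2 * (A + a)))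

namespace gdGapBound

variable {L c G A a : ℝ}

theorem eq_inv_add_quadratic (ha : A + a ≠ 0) :
    gdGapBound L c G A a =
      (G + c * A ^ 2 / 2) * (A + a)⁻¹ + (c * L / 2 * a ^ 2 - c / 2 * (A + a)) := by
  rw [gdGapBound]
  field_simp
  ring

theorem convexOn_Ioi (hcL : 0 ≤ c * L) (hG : 0 ≤ G + c * A ^ 2 / 2) :
    ConvexOn ℝ (Ioi (-A)) (gdGapBound L c G A) := by
  have hdom : Convex ℝ (Ioi (-A)) := convex_Ioi _
  have hinv : ConvexOn ℝ (Ioi (-A)) fun a ↦ (A + a)⁻¹ := by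
    simpa [Function.comp_def] using (convexOn_zpow (𝕜 := ℝ) (-1)).translate_right A
  have hsq : ConvexOn ℝ (Ioi (-A)) fun a ↦ a ^ 2 :=
    even_two.convexOn_pow.subset (subset_univ _) hdom
  have haffine : ConcaveOn ℝ (Ioi (-A)) fun a ↦ c / 2 * (A + a) := by
    simpa [mul_add, Pi.add_def] using
      (concaveOn_const (c / 2 * A) hdom).add ((LinearMap.mulLeft ℝ (c / 2)).concaveOn hdom)
  refine ((hinv.smul hG).add ((hsq.smul (by positivity : 0 ≤ c * L / 2)).sub haffine)).congr ?_
  intro a ha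
  exact (eq_inv_add_quadratic (neg_lt_iff_pos_add'.mp ha).ne').symm

theorem hasDerivAt (ha : A + a ≠ 0) :
    HasDerivAt (gdGapBound L c G A)
      (c * (L * a - 1 / 2) - (G + c * A ^ 2 / 2) / (A + a) ^ 2) a := by
  have hshift : HasDerivAt (fun x ↦ A + x) 1 a := (hasDerivAt_id' a).const_add A
  have hformula :=
    ((hshift.fun_inv ha).const_mul (G + c * A ^ 2 / 2)).fun_add
      (((hasDerivAt_pow 2 a).const_mul (c * L / 2)).fun_sub (hshift.const_mul (c / 2)))
  have heq : gdGapBound L c G A =ᶠ[nhds a] fun x ↦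
      (G + c * A ^ 2 / 2) * (A + x)⁻¹ + (c * L / 2 * x ^ 2 - c / 2 * (A + x)) :=
    (hshift.continuousAt.eventually_ne ha).mono fun _ ↦ eq_inv_add_quadratic
  refine (hformula.congr_of_eventuallyEq heq).congr_deriv ?_
  push_cast
  ring

theorem deriv_le (hG : 0 ≤ G + c * A ^ 2 / 2) (ha : A + a ≠ 0) :
    deriv (gdGapBound L c G A) a ≤ c * (L * a - 1 / 2) := by
  rw [(hasDerivAt ha).deriv]
  exact sub_le_self _ (by positivity)

theorem one_div_two_mul_le_of_isLocalMin (hL : 0 < L) (hc : 0 < c)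
    (hG : 0 ≤ G + c * A ^ 2 / 2) (ha : A + a ≠ 0) (hmin : IsLocalMin (gdGapBound L c G A) a) :
    1 / (2 * L) ≤ a := by
  have hslope : 0 ≤ c * (L * a - 1 / 2) := hmin.deriv_eq_zero.symm.trans_le (deriv_le hG ha)
  have hlin : 0 ≤ L * a - 1 / 2 := nonneg_of_mul_nonneg_right hslope hc
  rw [div_le_iff₀ (by positivity)]
  linarith

end gdGapBound

/-- Properties of the per-iteration primal-dual gap model for gradient descent:
`φ` is convex on `(0,∞)`, its derivative at `1/(2L)` is nonpositive, and hence
every minimizer of `φ` over `(0,∞)` is at least `1/(2L)`. -/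
theorem gd_pd_short_step_model_properties
    (L c Gp A : ℝ) (hL : 0 < L) (hc : 0 < c) (hGp : 0 ≤ Gp) (hA : 0 ≤ A)
    (φ : ℝ → ℝ)
    (hφ : ∀ a : ℝ, φ a =
      Gp / (A + a) + c * (-(a * A) / (A + a) + a ^ 2 * L / 2 - a ^ 2 / (2 * (A + a)))) :
    ConvexOn ℝ (Set.Ioi (0 : ℝ)) φ ∧
      deriv φ (1 / (2 * L)) ≤ 0 ∧
      ∀ astar ∈ Set.Ioi (0 : ℝ), (∀ b ∈ Set.Ioi (0 : ℝ), φ astar ≤ φ b) →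
        1 / (2 * L) ≤ astar := by
  obtain rfl : φ = gdGapBound L c Gp A := funext hφ
  have hG : 0 ≤ Gp + c * A ^ 2 / 2 := by positivity
  have hne {a : ℝ} (ha : 0 < a) : A + a ≠ 0 := (add_pos_of_nonneg_of_pos hA ha).ne'
  refine ⟨?convex, ?slope, fun astar hpos hmin ↦ ?minimizer⟩
  case convex =>
    exact (gdGapBound.convexOn_Ioi (by positivity) hG).subset
      (Ioi_subset_Ioi (neg_nonpos.mpr hA)) (convex_Ioi 0)
  case slope =>
    calc deriv (gdGapBound L c Gp A) (1 / (2 * L))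
      _ ≤ c * (L * (1 / (2 * L)) - 1 / 2) := gdGapBound.deriv_le hG (hne (by positivity))
      _ = 0 := by field_simp; ring
  case minimizer =>
    exact gdGapBound.one_div_two_mul_le_of_isLocalMin hL hc hG (hne hpos)
      (Filter.eventually_of_mem (Ioi_mem_nhds hpos) hmin)
end

section
/- For every t ≥ 1 and every a_t > 0, the primal-dual gap of gradient descent satisfies G_t ≤ 𝒢_{t−1}/A_t + (a_t²/(2A_t))‖∇f(x_t)‖² + f(x_{t+1}) − f(x_t). Moreover, for any 𝒢 ≥ 0, A ≥ 0, x ∈ ℝ^d, and g ∈ ℝ^d, the right-hand side as a function of the step, a ↦ 𝒢/(A + a) + (a²/(2(A + a)))‖g‖² + f(x − a g) − f(x), is convex on (0, ∞). -/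
open scoped RealInnerProductSpace

/-!
With `mₙ` the minimum over `u` of the regularized sum of linearizations
`∑ i ≤ n, aᵢ (cᵢ + ⟪gᵢ, u - xᵢ⟫) + ‖u - x₁‖² / 2`, completing the square in each gradient step
shows that `xₙ₊₁` is the minimizer and that the excess over `mₙ` is exactly `‖u - xₙ₊₁‖² / 2`.
Hence `mₙ₊₁ = mₙ + aₙ₊₁ cₙ₊₁ - aₙ₊₁² ‖gₙ₊₁‖² / 2`, so the gap bound holds with equality. For the
convexity in the step, polynomial division gives
`b² / (A + b) = b - A + A² / (A + b)`, which leaves a nonnegative multiple of `(A + b)⁻¹` plus an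
affine function.
-/

section Convexity

lemma convexOn_of_forall_exists_linearMap_le {E : Type*} [AddCommGroup E] [Module ℝ E]
    {s : Set E} {f : E → ℝ} (hs : Convex ℝ s)
    (h : ∀ x ∈ s, ∃ φ : E →ₗ[ℝ] ℝ, ∀ y ∈ s, f x + φ (y - x) ≤ f y) : ConvexOn ℝ s f := by
  refine ⟨hs, fun x hx y hy p q hp hq hpq => ?_⟩
  obtain ⟨φ, hφ⟩ := h (p • x + q • y) (hs hx hy hp hq hpq)
  set w := p • x + q • y with hw
  have balance : p * φ (x - w) + q * φ (y - w) = 0 := by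
    have hφw : φ w = p * φ x + q * φ y := by simp [hw]
    rw [map_sub, map_sub]
    linear_combination -hφw - φ w * hpq
  calc f w = p * (f w + φ (x - w)) + q * (f w + φ (y - w)) := by
        linear_combination -f w * hpq - balance
    _ ≤ p • f x + q • f y := by
        simp only [smul_eq_mul]
        gcongr
        exacts [hφ x hx, hφ y hy]

lemma convexOn_comp_sub_smul {E : Type*} [AddCommGroup E] [Module ℝ E] {s : Set E} {f : E → ℝ}
    (hf : ConvexOn ℝ s f) (z g : E) :
    ConvexOn ℝ ((fun b : ℝ => z - b • g) ⁻¹' s) (fun b : ℝ => f (z - b • g)) := by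
  have line_eq : ⇑(AffineMap.lineMap (k := ℝ) z (z - g)) = fun b : ℝ => z - b • g := by
    ext b
    simp [AffineMap.lineMap_apply, neg_add_eq_sub]
  simpa only [line_eq, Function.comp_def] using hf.comp_affineMap (AffineMap.lineMap z (z - g))

lemma convexOn_inv_add (A : ℝ) : ConvexOn ℝ (Set.Ioi (-A)) (fun b : ℝ => (A + b)⁻¹) := by
  have h := (convexOn_zpow (𝕜 := ℝ) (-1)).translate_right A
  simpa [Function.comp_def, Set.preimage_const_add_Ioi] using h

lemma convexOn_div_add_sq_div {P A c : ℝ} (h : 0 ≤ P + c / 2 * A ^ 2) :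
    ConvexOn ℝ (Set.Ioi (-A)) (fun b : ℝ => P / (A + b) + b ^ 2 / (2 * (A + b)) * c) := by
  have affine : ConvexOn ℝ (Set.Ioi (-A)) (fun b : ℝ => c / 2 * b + -(c / 2 * A)) :=
    ((LinearMap.mulLeft ℝ (c / 2)).convexOn (convex_Ioi (-A))).add_const (-(c / 2 * A))
  refine (((convexOn_inv_add A).smul h).add affine).congr fun b hb => ?_
  have hpos : 0 < A + b := neg_lt_iff_pos_add'.mp hb
  simp only [Pi.add_apply, smul_eq_mul]
  field_simp
  ring

end Convexity

section LowerModel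

variable {E : Type*} [NormedAddCommGroup E] [InnerProductSpace ℝ E]

lemma mul_inner_add_half_norm_sub_sq (α : ℝ) (v x u : E) :
    α * ⟪v, u - x⟫ + 1 / 2 * ‖u - x‖ ^ 2 =
      1 / 2 * ‖u - (x - α • v)‖ ^ 2 - α ^ 2 / 2 * ‖v‖ ^ 2 := by
  have expand : ‖u - (x - α • v)‖ ^ 2 =
      ‖u - x‖ ^ 2 + 2 * (α * ⟪v, u - x⟫) + α ^ 2 * ‖v‖ ^ 2 := by
    rw [← sub_add, norm_add_sq_real, real_inner_smul_right, real_inner_comm, norm_smul, mul_pow,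
      Real.norm_eq_abs, sq_abs]
  linear_combination -(1 / 2) * expand

/-- The regularized sum of weighted linearizations with values `c i` and slopes `g i` at the points
`x i`. Indices start at `1`, and for `c i = f (x i)`, `g i = ∇f (x i)` the lower bound of the paper
is `A_t L_t = lowerModel c a g x t (x (t + 1)) - D ^ 2 / 2`. -/
noncomputable def lowerModel (c a : ℕ → ℝ) (g x : ℕ → E) (n : ℕ) (u : E) : ℝ :=
  (∑ i ∈ Finset.Icc 1 n, a i * (c i + ⟪g i, u - x i⟫)) + 1 / 2 * ‖u - x 1‖ ^ 2

/-- The scaled primal-dual gap `𝒢_n = A_n (c (n + 1) - L_n)`, multiplied out so that it is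
meaningful at `n = 0`, where `A_0 = 0` and the value is `D ^ 2 / 2`. -/
noncomputable def scaledGap (c a : ℕ → ℝ) (g x : ℕ → E) (D : ℝ) (n : ℕ) : ℝ :=
  (∑ i ∈ Finset.Icc 1 n, a i) * c (n + 1) - (lowerModel c a g x n (x (n + 1)) - 1 / 2 * D ^ 2)

variable (c : ℕ → ℝ) {a : ℕ → ℝ} {g x : ℕ → E}

lemma lowerModel_succ (n : ℕ) (u : E) :
    lowerModel c a g x (n + 1) u =
      lowerModel c a g x n u + a (n + 1) * (c (n + 1) + ⟪g (n + 1), u - x (n + 1)⟫) := by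
  rw [lowerModel, lowerModel, Finset.sum_Icc_succ_top (by omega)]
  ring

lemma lowerModel_eq_add_half_norm_sub_sq (hx : ∀ t, 1 ≤ t → x (t + 1) = x t - a t • g t)
    (n : ℕ) (u : E) :
    lowerModel c a g x n u =
      lowerModel c a g x n (x (n + 1)) + 1 / 2 * ‖u - x (n + 1)‖ ^ 2 := by
  induction n generalizing u with
  | zero => simp [lowerModel]
  | succ n ih =>
    have model_succ (w : E) : lowerModel c a g x (n + 1) w =
        lowerModel c a g x n (x (n + 1)) + a (n + 1) * c (n + 1)
          - a (n + 1) ^ 2 / 2 * ‖g (n + 1)‖ ^ 2 + 1 / 2 * ‖w - x (n + 1 + 1)‖ ^ 2 := by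
      rw [hx (n + 1) (by omega), lowerModel_succ, ih w]
      linear_combination mul_inner_add_half_norm_sub_sq (a (n + 1)) (g (n + 1)) (x (n + 1)) w
    rw [model_succ u, model_succ (x (n + 1 + 1)), sub_self, norm_zero]
    ring

lemma lowerModel_succ_iterate (hx : ∀ t, 1 ≤ t → x (t + 1) = x t - a t • g t) (n : ℕ) :
    lowerModel c a g x (n + 1) (x (n + 1 + 1)) =
      lowerModel c a g x n (x (n + 1)) + a (n + 1) * c (n + 1)
        - a (n + 1) ^ 2 / 2 * ‖g (n + 1)‖ ^ 2 := by
  have square := mul_inner_add_half_norm_sub_sq (a (n + 1)) (g (n + 1)) (x (n + 1)) (x (n + 1 + 1))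
  rw [← hx (n + 1) (by omega), sub_self, norm_zero] at square
  rw [lowerModel_succ, lowerModel_eq_add_half_norm_sub_sq c hx n (x (n + 1 + 1))]
  linear_combination square

lemma scaledGap_zero (D : ℝ) : scaledGap c a g x D 0 = 1 / 2 * D ^ 2 := by
  simp [scaledGap, lowerModel]

lemma scaledGap_succ (hx : ∀ t, 1 ≤ t → x (t + 1) = x t - a t • g t) (D : ℝ) (n : ℕ) :
    scaledGap c a g x D (n + 1) = scaledGap c a g x D n + a (n + 1) ^ 2 / 2 * ‖g (n + 1)‖ ^ 2
      + (∑ i ∈ Finset.Icc 1 (n + 1), a i) * (c (n + 1 + 1) - c (n + 1)) := by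
  rw [scaledGap, scaledGap, lowerModel_succ_iterate c hx, Finset.sum_Icc_succ_top (by omega)]
  ring

end LowerModel

theorem gd_pd_gap_bound_and_convexity_general
    {E : Type*} [NormedAddCommGroup E] [InnerProductSpace ℝ E]
    (f : E → ℝ) (f' : E → E) (hsubgrad : ∀ x y : E, 0 ≤ f y - f x - ⟪f' x, y - x⟫)
    (x : ℕ → E) (D : ℝ) (a A : ℕ → ℝ) (hA0 : ∀ t, 1 ≤ t → A t ≠ 0)
    (hA : ∀ t, A t = ∑ i ∈ Finset.Icc 1 t, a i)
    (hxrec : ∀ t, 1 ≤ t → x (t + 1) = x t - a t • f' (x t))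
    (G Gc : ℕ → ℝ)
    (hG : ∀ t, 1 ≤ t → G t = f (x (t + 1)) - (1 / A t) *
      ((∑ i ∈ Finset.Icc 1 t, a i * (f (x i) + ⟪f' (x i), x (t + 1) - x i⟫))
        + 1 / 2 * ‖x (t + 1) - x 1‖ ^ 2 - 1 / 2 * D ^ 2))
    (hGc0 : Gc 0 = 1 / 2 * D ^ 2)
    (hGc : ∀ t, 1 ≤ t → Gc t = A t * G t) :
    (∀ t : ℕ, 1 ≤ t →
      G t = Gc (t - 1) / A t + a t ^ 2 / (2 * A t) * ‖f' (x t)‖ ^ 2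
        + f (x (t + 1)) - f (x t)) ∧
    (∀ (P B : ℝ), 0 ≤ P → ∀ z g : E,
      ConvexOn ℝ (Set.Ioi (-B)) (fun b : ℝ =>
        P / (B + b) + b ^ 2 / (2 * (B + b)) * ‖g‖ ^ 2 + f (z - b • g) - f z)) := by
  refine ⟨fun t ht => ?_, fun P B hP z g => ?_⟩
  · have gap_eq (n : ℕ) :
        Gc n = scaledGap (fun i => f (x i)) a (fun i => f' (x i)) x D n := by
      rcases Nat.eq_zero_or_pos n with rfl | hn
      · rw [hGc0, scaledGap_zero]
      · have := hA0 n hn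
        rw [hGc n hn, hG n hn, scaledGap, lowerModel, ← hA]
        field_simp
    obtain ⟨n, rfl⟩ := Nat.exists_eq_add_of_le' ht
    have recursion := scaledGap_succ (fun i => f (x i)) hxrec D n
    rw [← gap_eq, ← gap_eq, hGc _ ht, ← hA] at recursion
    have := hA0 (n + 1) ht
    rw [Nat.add_sub_cancel]
    field_simp
    linear_combination 2 * recursion
  · have hf : ConvexOn ℝ Set.univ f := convexOn_of_forall_exists_linearMap_le convex_univ
      fun x _ => ⟨innerₗ E (f' x), fun y _ => by
        simpa only [sub_sub, sub_nonneg, innerₗ_apply_apply] using hsubgrad x y⟩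
    have line := (convexOn_comp_sub_smul hf z g).subset (Set.subset_univ _) (convex_Ioi (-B))
    have hcoef : 0 ≤ P + ‖g‖ ^ 2 / 2 * B ^ 2 := by positivity
    exact ((convexOn_div_add_sq_div hcoef).add line).add_const (-f z)

/-- Per-iteration primal-dual gap bound for gradient descent, and convexity of the
line-search objective in the step size. -/
theorem gd_pd_gap_bound_and_convexity
    {d : ℕ}
    (f : EuclideanSpace ℝ (Fin d) → ℝ) (f' : EuclideanSpace ℝ (Fin d) → EuclideanSpace ℝ (Fin d))
    (hgrad : ∀ z, HasGradientAt f (f' z) z)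
    (hconv : ∀ x y : EuclideanSpace ℝ (Fin d), 0 ≤ f y - f x - ⟪f' x, y - x⟫)
    (xs : EuclideanSpace ℝ (Fin d)) (hxs : ∀ z, f xs ≤ f z)
    (x : ℕ → EuclideanSpace ℝ (Fin d))
    (D : ℝ) (hD : ‖x 1 - xs‖ ≤ D)
    (a A : ℕ → ℝ) (hapos : ∀ t, 1 ≤ t → 0 < a t)
    (hA : ∀ t, A t = ∑ i ∈ Finset.Icc 1 t, a i)
    (hxrec : ∀ t, 1 ≤ t → x (t + 1) = x t - a t • f' (x t))
    (G Gc : ℕ → ℝ)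
    (hG : ∀ t, 1 ≤ t → G t = f (x (t + 1)) - (1 / A t) *
      ((∑ i ∈ Finset.Icc 1 t, a i * (f (x i) + ⟪f' (x i), x (t + 1) - x i⟫))
        + 1 / 2 * ‖x (t + 1) - x 1‖ ^ 2 - 1 / 2 * D ^ 2))
    (hGc0 : Gc 0 = 1 / 2 * D ^ 2)
    (hGc : ∀ t, 1 ≤ t → Gc t = A t * G t) :
    (∀ t : ℕ, 1 ≤ t →
      G t ≤ Gc (t - 1) / A t + a t ^ 2 / (2 * A t) * ‖f' (x t)‖ ^ 2
        + f (x (t + 1)) - f (x t)) ∧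
    (∀ (Gp A' : ℝ), 0 ≤ Gp → 0 ≤ A' →
      ∀ (z g : EuclideanSpace ℝ (Fin d)),
        ConvexOn ℝ (Set.Ioi (0 : ℝ)) (fun b : ℝ =>
          Gp / (A' + b) + b ^ 2 / (2 * (A' + b)) * ‖g‖ ^ 2 + f (z - b • g) - f z)) := by
  have hA0 (t : ℕ) (ht : 1 ≤ t) : A t ≠ 0 := hA t ▸
    (Finset.sum_pos (fun i hi => hapos i (Finset.mem_Icc.mp hi).1) (Finset.nonempty_Icc.mpr ht)).ne'
  obtain ⟨gap, convexity⟩ :=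
    gd_pd_gap_bound_and_convexity_general f f' hconv x D a A hA0 hA hxrec G Gc hG hGc0 hGc
  exact ⟨fun t ht => (gap t ht).le, fun Gp A' hGp hA' z g => (convexity Gp A' hGp z g).subset
    (Set.Ioi_subset_Ioi (neg_nonpos.mpr hA')) (convex_Ioi 0)⟩
end

section
/- If the regularizer is time-invariant, ψ_t = ψ for all t, then for every u ∈ X and every choice of subgradients g_t ∈ ∂ℓ_t(z_t), the optimistic FTRL iterates satisfy Σ_{t=1}^T (ℓ_t(z_t) − ℓ_t(u)) ≤ ψ(u) − inf_{z∈X} ψ(z) + Σ_{t=1}^T ⟨g_t − g̃_t, z_t − z_{t+1}⟩. -/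
open scoped RealInnerProductSpace

/-!
Give the comparator the index `T + 1`, as if it were one more iterate, and let `m t` be the
function that stands in for the unseen loss `l t` in round `t`. The optimality of `z t` need only
be tested against `z (t + 1)`: in round `t` the regularized cumulative loss at the current iterate
then grows by at least `l t (z (t + 1)) + m t (z t) - m t (z (t + 1))`. Summing over `t` leaves the
variation of the prediction errors `l t - m t` along the iterates, and subgradients and linear
hints turn this variation into a pairing with `g t - gh t`.
-/

section OptimisticFTRL

variable {α : Type*} {X : Set α} {T : ℕ} {l m : ℕ → α → ℝ} {ψ : α → ℝ} {z : ℕ → α}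

/-- The function minimized by optimistic follow-the-regularized-leader in round `t`: the losses of
the previous rounds, the prediction `m t` of the current loss and the regularizer `ψ`. Rounds are
numbered from `1`; the hints of the paper are the linear predictions `m t = ⟪g̃ t, ·⟫`. -/
def optimisticObjective (l m : ℕ → α → ℝ) (ψ : α → ℝ) (t : ℕ) (x : α) : ℝ :=
  (∑ i ∈ Finset.Icc 1 (t - 1), l i x) + m t x + ψ x

theorem sum_loss_add_regularizer_le_of_objective_le_succ
    (hz : ∀ t ∈ Finset.Icc 1 T,
      optimisticObjective l m ψ t (z t) ≤ optimisticObjective l m ψ t (z (t + 1))) :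
    ∑ t ∈ Finset.Icc 1 T, l t (z t) + ψ (z 1)
      ≤ ∑ t ∈ Finset.Icc 1 T, l t (z (T + 1)) + ψ (z (T + 1))
        + ∑ t ∈ Finset.Icc 1 T,
          ((l t (z t) - m t (z t)) - (l t (z (t + 1)) - m t (z (t + 1)))) := by
  induction T with
  | zero => simp
  | succ n ih =>
    have previous_rounds := ih fun t ht => hz t (Finset.Icc_subset_Icc_right n.le_succ ht)
    have last_round :
        (∑ t ∈ Finset.Icc 1 n, l t (z (n + 1))) + m (n + 1) (z (n + 1)) + ψ (z (n + 1))
          ≤ (∑ t ∈ Finset.Icc 1 n, l t (z (n + 2))) + m (n + 1) (z (n + 2)) + ψ (z (n + 2)) :=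
      hz (n + 1) (Finset.right_mem_Icc.mpr n.succ_pos)
    simp only [Finset.sum_Icc_succ_top n.succ_pos]
    linarith

theorem regret_le_regularizer_add_sum_prediction_error
    (hψbdd : BddBelow (ψ '' X)) (hmem : ∀ t ∈ Finset.Icc 1 (T + 1), z t ∈ X)
    (hmin : ∀ t ∈ Finset.Icc 1 T, IsMinOn (optimisticObjective l m ψ t) X (z t)) :
    ∑ t ∈ Finset.Icc 1 T, (l t (z t) - l t (z (T + 1)))
      ≤ ψ (z (T + 1)) - sInf (ψ '' X)
        + ∑ t ∈ Finset.Icc 1 T,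
          ((l t (z t) - m t (z t)) - (l t (z (t + 1)) - m t (z (t + 1)))) := by
  have hsucc : ∀ t ∈ Finset.Icc 1 T, z (t + 1) ∈ X := fun t ht => hmem (t + 1) (by grind)
  have hinf : sInf (ψ '' X) ≤ ψ (z 1) :=
    csInf_le hψbdd (Set.mem_image_of_mem ψ (hmem 1 (Finset.left_mem_Icc.mpr T.succ_pos)))
  have htelescope := sum_loss_add_regularizer_le_of_objective_le_succ
    fun t ht => hmin t ht (hsucc t ht)
  rw [Finset.sum_sub_distrib]
  linarith

end OptimisticFTRL

theorem optimistic_ftrl_regret_time_invariant_general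
    {E : Type*} [AddCommGroup E] [Module ℝ E] {X : Set E} {T : ℕ}
    {l : ℕ → E → ℝ} {ψ : E → ℝ} (hψbdd : BddBelow (ψ '' X))
    {gh g : ℕ → Module.Dual ℝ E} {z : ℕ → E} {u : E} (hu : u ∈ X)
    (hz : ∀ t ∈ Finset.Icc 1 T,
      z t ∈ X ∧ IsMinOn (optimisticObjective l (fun t => gh t) ψ t) X (z t))
    (hzT1 : z (T + 1) = u)
    (hgsub : ∀ t ∈ Finset.Icc 1 T, ∀ w ∈ X, l t (z t) + g t (w - z t) ≤ l t w) :
    ∑ t ∈ Finset.Icc 1 T, (l t (z t) - l t u)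
      ≤ ψ u - sInf (ψ '' X) + ∑ t ∈ Finset.Icc 1 T, (g t - gh t) (z t - z (t + 1)) := by
  subst hzT1
  have hmem : ∀ t ∈ Finset.Icc 1 (T + 1), z t ∈ X := by
    intro t ht
    obtain ⟨ht1, htT⟩ := Finset.mem_Icc.mp ht
    rcases Nat.le_succ_iff.mp htT with hle | rfl
    · exact (hz t (Finset.mem_Icc.mpr ⟨ht1, hle⟩)).1
    · exact hu
  refine (regret_le_regularizer_add_sum_prediction_error hψbdd hmem
    fun t ht => (hz t ht).2).trans ?_
  gcongr with t ht
  have hsub : l t (z t) + g t (z (t + 1) - z t) ≤ l t (z (t + 1)) :=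
    hgsub t ht _ (hmem (t + 1) (by grind))
  simp only [LinearMap.sub_apply, map_sub] at hsub ⊢
  linarith

/-- Regret bound for optimistic FTRL with a time-invariant regularizer. -/
theorem optimistic_ftrl_regret_time_invariant
    {E : Type*} [NormedAddCommGroup E] [InnerProductSpace ℝ E] [FiniteDimensional ℝ E]
    (X : Set E) (hXclosed : IsClosed X) (hXconv : Convex ℝ X) (hXne : X.Nonempty)
    (T : ℕ)
    (l : ℕ → E → ℝ) (ψ : E → ℝ)
    (hlconv : ∀ t, ConvexOn ℝ X (l t)) (hψconv : ConvexOn ℝ X ψ)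
    (hψbdd : BddBelow (ψ '' X))
    (gh : ℕ → E)  -- the hints g̃_t
    (z : ℕ → E) (u : E) (hu : u ∈ X)
    (hz : ∀ t ∈ Finset.Icc 1 T, z t ∈ X ∧ ∀ w ∈ X,
      (∑ i ∈ Finset.Icc 1 (t - 1), l i (z t)) + ⟪gh t, z t⟫ + ψ (z t)
        ≤ (∑ i ∈ Finset.Icc 1 (t - 1), l i w) + ⟪gh t, w⟫ + ψ w)
    (hzT1 : z (T + 1) = u)
    (g : ℕ → E)
    (hgsub : ∀ t ∈ Finset.Icc 1 T, ∀ w ∈ X, l t (z t) + ⟪g t, w - z t⟫ ≤ l t w) :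
    ∑ t ∈ Finset.Icc 1 T, (l t (z t) - l t u)
      ≤ ψ u - sInf (ψ '' X) + ∑ t ∈ Finset.Icc 1 T, ⟪g t - gh t, z t - z (t + 1)⟫ := by
  simpa only [← map_sub, innerₗ_apply_apply] using
    optimistic_ftrl_regret_time_invariant_general (gh := fun t => innerₗ E (gh t))
      (g := fun t => innerₗ E (g t)) hψbdd hu hz hzT1 hgsub
end

section
/- For every u ∈ X, the optimistic mirror descent iterates satisfy Σ_{t=1}^T (ℓ_t(z_t) − ℓ_t(u)) ≤ D_ψ(u, z_0; φ_0) + Σ_{t=1}^T ⟨g_t − g̃_t, z_t − z_{t+1}⟩. -/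
open scoped RealInnerProductSpace

/-!
Write `D_t = D_ψ(u, z_t; φ_t)`. By the three-point identity for Bregman divergences, the potential
`D_t + ⟨g̃_t, z_t - u⟩` drops from `t` to `t + 1` by at least
`⟨g_t, z_t - u⟩ - ⟨g_t - g̃_t, z_t - z_{t+1}⟩`. Summing over `0 ≤ t ≤ T` telescopes. Both outer
hints vanish, so the potential equals `D_0` at time `0` and `D_{T+1} ≥ 0` at time `T + 1`, while the
subgradient inequality bounds the regret by its linearization `∑ ⟨g_t, z_t - u⟩`.
-/

section MirrorDescent

variable {R E : Type*} [CommRing R] [AddCommGroup E] [Module R E]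

/-- The Bregman divergence `D_ψ(x, y; φ)` with specified subgradient `φ`. Subgradients are linear
functionals, so that no inner product is needed. -/
def bregmanDiv (ψ : E → R) (x y : E) (φ : Module.Dual R E) : R :=
  ψ x - ψ y - φ (x - y)

/-- The potential `D_ψ(u, z; φ) + ⟨h, z - u⟩` of optimistic mirror descent at iterate `z` with hint
`h` and comparator `u`; its successive differences pay for the linearized losses. -/
def optimisticPotential (ψ : E → R) (u z : E) (φ h : Module.Dual R E) : R :=
  bregmanDiv ψ u z φ + h (z - u)

theorem bregmanDiv_three_point (ψ : E → R) (u y y' : E) (φ φ' : Module.Dual R E) :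
    bregmanDiv ψ u y φ - bregmanDiv ψ u y' φ' = bregmanDiv ψ y' y φ + (φ - φ') (y' - u) := by
  simp only [bregmanDiv, LinearMap.sub_apply, map_sub]
  ring

theorem optimisticPotential_sub_optimisticPotential (ψ : E → R) (u z z' : E)
    (φ g h h' : Module.Dual R E) :
    optimisticPotential ψ u z φ h - optimisticPotential ψ u z' (φ - (g + h' - h)) h' =
      bregmanDiv ψ z' z φ + g (z - u) - (g - h) (z - z') := by
  have three_point := bregmanDiv_three_point ψ u z z' φ (φ - (g + h' - h))
  simp only [optimisticPotential, LinearMap.sub_apply, LinearMap.add_apply, map_sub]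
    at three_point ⊢
  linear_combination three_point

variable [LinearOrder R]

/-- `φ` is a subgradient at `y` of `f` as a function on `X`, written `φ ∈ ∂f(y)`. As for `IsMinOn`,
the point `y` is not required to lie in `X`. -/
def IsSubgradientOn (f : E → R) (X : Set E) (φ : Module.Dual R E) (y : E) : Prop :=
  ∀ w ∈ X, f y + φ (w - y) ≤ f w

variable [IsStrictOrderedRing R] {X : Set E}

theorem IsSubgradientOn.sub_le {f : E → R} {φ : Module.Dual R E} {y u : E}
    (hφ : IsSubgradientOn f X φ y) (hu : u ∈ X) : f y - f u ≤ φ (y - u) := by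
  have hfu := hφ u hu
  rw [← neg_sub, map_neg] at hfu
  linarith

theorem IsSubgradientOn.bregmanDiv_nonneg {ψ : E → R} {φ : Module.Dual R E} {y u : E}
    (hφ : IsSubgradientOn ψ X φ y) (hu : u ∈ X) : 0 ≤ bregmanDiv ψ u y φ := by
  have hψu := hφ u hu
  rw [bregmanDiv]
  linarith

theorem sum_linearized_regret_le {ψ : E → R} {z : ℕ → E} {φ g h : ℕ → Module.Dual R E} {n : ℕ}
    (hz : ∀ t < n, z (t + 1) ∈ X)
    (hφ : ∀ t < n, IsSubgradientOn ψ X (φ t) (z t))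
    (hφ_succ : ∀ t < n, φ (t + 1) = φ t - (g t + h (t + 1) - h t)) (u : E) :
    ∑ t ∈ Finset.range n, g t (z t - u) ≤
      optimisticPotential ψ u (z 0) (φ 0) (h 0) - optimisticPotential ψ u (z n) (φ n) (h n) +
        ∑ t ∈ Finset.range n, (g t - h t) (z t - z (t + 1)) := by
  let V (t : ℕ) : R := optimisticPotential ψ u (z t) (φ t) (h t)
  have potential_drop (t : ℕ) (ht : t < n) :
      g t (z t - u) ≤ V t - V (t + 1) + (g t - h t) (z t - z (t + 1)) := by
    have hV : V t - V (t + 1) = bregmanDiv ψ (z (t + 1)) (z t) (φ t) + g t (z t - u) -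
        (g t - h t) (z t - z (t + 1)) := by
      simp only [V, hφ_succ t ht, optimisticPotential_sub_optimisticPotential]
    linarith [(hφ t ht).bregmanDiv_nonneg (hz t ht)]
  calc ∑ t ∈ Finset.range n, g t (z t - u)
      ≤ ∑ t ∈ Finset.range n, (V t - V (t + 1) + (g t - h t) (z t - z (t + 1))) :=
        Finset.sum_le_sum fun t ht => potential_drop t (Finset.mem_range.1 ht)
    _ = V 0 - V n + ∑ t ∈ Finset.range n, (g t - h t) (z t - z (t + 1)) := by
        rw [Finset.sum_add_distrib, Finset.sum_range_sub']

/-- Together, `hφ` at `t + 1` and `hφ_succ` at `t` are the optimality condition for `z (t + 1)` to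
minimize `w ↦ (g t + h (t + 1) - h t) w + bregmanDiv ψ w (z t) (φ t)` over `X`. -/
theorem optimistic_md_regret_general {T : ℕ} {ψ : E → R} {l : ℕ → E → R} {z : ℕ → E}
    {φ g h : ℕ → Module.Dual R E} (hg0 : g 0 = 0) (hh0 : h 0 = 0) (hhT : h (T + 1) = 0)
    (hz : ∀ t ≤ T, z (t + 1) ∈ X)
    (hφ : ∀ t ≤ T + 1, IsSubgradientOn ψ X (φ t) (z t))
    (hφ_succ : ∀ t ≤ T, φ (t + 1) = φ t - (g t + h (t + 1) - h t))
    (hg : ∀ t ∈ Finset.Icc 1 T, IsSubgradientOn (l t) X (g t) (z t)) {u : E} (hu : u ∈ X) :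
    ∑ t ∈ Finset.Icc 1 T, (l t (z t) - l t u) ≤
      bregmanDiv ψ u (z 0) (φ 0) + ∑ t ∈ Finset.Icc 1 T, (g t - h t) (z t - z (t + 1)) := by
  have linearized : ∑ t ∈ Finset.Icc 1 T, g t (z t - u) ≤
      bregmanDiv ψ u (z 0) (φ 0) - bregmanDiv ψ u (z (T + 1)) (φ (T + 1)) +
        ∑ t ∈ Finset.Icc 1 T, (g t - h t) (z t - z (t + 1)) := by
    simpa [Finset.sum_range_eq_add_Ico, Finset.Ico_add_one_right_eq_Icc, optimisticPotential,
      hg0, hh0, hhT] using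
      sum_linearized_regret_le (n := T + 1) (fun t ht => hz t (Nat.le_of_lt_succ ht))
        (fun t ht => hφ t ht.le) (fun t ht => hφ_succ t (Nat.le_of_lt_succ ht)) u
  calc ∑ t ∈ Finset.Icc 1 T, (l t (z t) - l t u)
      ≤ ∑ t ∈ Finset.Icc 1 T, g t (z t - u) :=
        Finset.sum_le_sum fun t ht => (hg t ht).sub_le hu
    _ ≤ bregmanDiv ψ u (z 0) (φ 0) + ∑ t ∈ Finset.Icc 1 T, (g t - h t) (z t - z (t + 1)) := by
        linarith [(hφ (T + 1) le_rfl).bregmanDiv_nonneg hu]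

end MirrorDescent

/-- Regret bound for optimistic mirror descent with a (possibly non-differentiable,
non-strongly convex) regularizer. The Bregman divergence with specified subgradient
is `D_ψ(x, y; φ) = ψ x - ψ y - ⟪φ, x - y⟫`. -/
theorem optimistic_md_regret
    {E : Type*} [NormedAddCommGroup E] [InnerProductSpace ℝ E] [FiniteDimensional ℝ E]
    (X : Set E) (hXclosed : IsClosed X) (hXconv : Convex ℝ X)
    (T : ℕ)
    (ψ : E → ℝ) (l : ℕ → E → ℝ)
    (hψconv : ConvexOn ℝ X ψ) (hlconv : ∀ t, ConvexOn ℝ X (l t))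
    (z φ g gh : ℕ → E)
    (hz0 : z 0 ∈ X)
    (hg0 : g 0 = 0) (hgh0 : gh 0 = 0) (hghT1 : gh (T + 1) = 0)
    (hφ0 : ∀ w ∈ X, ψ (z 0) + ⟪φ 0, w - z 0⟫ ≤ ψ w)
    (hφrec : ∀ t ∈ Finset.Icc 1 (T + 1),
      φ t = φ (t - 1) - (g (t - 1) + gh t - gh (t - 1)))
    (hφsub : ∀ t ∈ Finset.Icc 1 (T + 1), ∀ w ∈ X, ψ (z t) + ⟪φ t, w - z t⟫ ≤ ψ w)
    (hzmin : ∀ t ∈ Finset.Icc 1 (T + 1), z t ∈ X ∧ ∀ w ∈ X,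
      ⟪g (t - 1) + gh t - gh (t - 1), z t⟫
          + (ψ (z t) - ψ (z (t - 1)) - ⟪φ (t - 1), z t - z (t - 1)⟫)
        ≤ ⟪g (t - 1) + gh t - gh (t - 1), w⟫
          + (ψ w - ψ (z (t - 1)) - ⟪φ (t - 1), w - z (t - 1)⟫))
    (hgsub : ∀ t ∈ Finset.Icc 1 T, ∀ w ∈ X, l t (z t) + ⟪g t, w - z t⟫ ≤ l t w) :
    ∀ u ∈ X,
      ∑ t ∈ Finset.Icc 1 T, (l t (z t) - l t u)
        ≤ (ψ u - ψ (z 0) - ⟪φ 0, u - z 0⟫)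
          + ∑ t ∈ Finset.Icc 1 T, ⟪g t - gh t, z t - z (t + 1)⟫ := by
  intro u hu
  have hφ : ∀ t ≤ T + 1, IsSubgradientOn ψ X (innerₗ E (φ t)) (z t)
    | 0, _ => hφ0
    | t + 1, ht => hφsub (t + 1) (Finset.mem_Icc.2 ⟨t.succ_pos, ht⟩)
  have hmem (t : ℕ) (ht : t ≤ T) : t + 1 ∈ Finset.Icc 1 (T + 1) := by simpa using ht
  simpa [bregmanDiv, inner_sub_left] using optimistic_md_regret_general
    (g := fun t => innerₗ E (g t)) (h := fun t => innerₗ E (gh t))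
    (by simp [hg0]) (by simp [hgh0]) (by simp [hghT1])
    (fun t ht => (hzmin (t + 1) (hmem t ht)).1) hφ
    (fun t ht => by simp [hφrec (t + 1) (hmem t ht)]) hgsub hu
end

section
/- For every t ≥ 0 (with the convention A_{−1}G_{−1} := 0), the generalized Frank-Wolfe iterates satisfy the per-iteration primal-dual bound A_t G_t − A_{t−1} G_{t−1} ≤ (L a_t²/(2A_t))·‖v_t − x_t‖². -/
open scoped RealInnerProductSpace

/-!
Multiplying the gap by `A_t` turns it into `∑ ℓ ≤ t, a_ℓ (F(x_{t+1}) - m_ℓ)`, where `F = f + ψ` and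
`m_ℓ` is the value at `v_ℓ` of `ψ` plus the linearization of `f` at `x_ℓ`. Its increment is
`A_t F(x_{t+1}) - A_{t-1} F(x_t) - a_t m_t`. As `x_{t+1}` is the average of `x_t` and `v_t` with
weights `A_{t-1}` and `a_t`, the `ψ` terms contribute at most zero by convexity, and
`x_{t+1} - x_t = (a_t / A_t) (v_t - x_t)` leaves only the quadratic error of the linearization
of `f`.
-/

section AveragingStep

variable {E : Type*}

theorem weightedAverage_sub_left {𝕜 : Type*} [Field 𝕜] [AddCommGroup E] [Module 𝕜 E] {a B : 𝕜}
    (hBa : B + a ≠ 0) (x v : E) :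
    (B / (B + a)) • x + (a / (B + a)) • v - x = (a / (B + a)) • (v - x) := by
  have hsum : B / (B + a) = 1 - a / (B + a) := by
    field_simp
    ring
  rw [hsum]
  module

theorem mul_weightedAverage_le_of_convexOn {𝕜 : Type*} [Field 𝕜] [LinearOrder 𝕜]
    [IsStrictOrderedRing 𝕜] [AddCommGroup E] [Module 𝕜 E] {C : Set E} {ψ : E → 𝕜}
    (hψ : ConvexOn 𝕜 C ψ) {x v : E} (hx : x ∈ C) (hv : v ∈ C) {a B : 𝕜} (ha : 0 ≤ a) (hB : 0 ≤ B)
    (hBa : 0 < B + a) :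
    (B + a) * ψ ((B / (B + a)) • x + (a / (B + a)) • v) ≤ B * ψ x + a * ψ v := by
  calc (B + a) * ψ ((B / (B + a)) • x + (a / (B + a)) • v)
      ≤ (B + a) * (B / (B + a) * ψ x + a / (B + a) * ψ v) := by
        gcongr
        exact (convexOn_iff_div.mp hψ).2 hx hv hB ha hBa
    _ = B * ψ x + a * ψ v := by field_simp

variable [SeminormedAddCommGroup E] [NormedSpace ℝ E] {f : E → ℝ} {L : ℝ} {x v : E} {a B : ℝ}

theorem mul_weightedAverage_le_of_quadratic_upper_bound {Φ : Type*} [FunLike Φ E ℝ]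
    [LinearMapClass Φ ℝ E ℝ] {g : Φ} (hBa : 0 < B + a) {y : E}
    (hy : y = (B / (B + a)) • x + (a / (B + a)) • v)
    (hf : f y - f x - g (y - x) ≤ L / 2 * ‖x - y‖ ^ 2) :
    (B + a) * f y
      ≤ (B + a) * f x + a * g (v - x) + L * a ^ 2 / (2 * (B + a)) * ‖v - x‖ ^ 2 := by
  have hyx : y - x = (a / (B + a)) • (v - x) := hy ▸ weightedAverage_sub_left hBa.ne' x v
  have hnorm : ‖x - y‖ ^ 2 = (a / (B + a)) ^ 2 * ‖v - x‖ ^ 2 := by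
    rw [norm_sub_rev, hyx, norm_smul, mul_pow, Real.norm_eq_abs, sq_abs]
  rw [hnorm, hyx, map_smul, smul_eq_mul] at hf
  calc (B + a) * f y
      ≤ (B + a) * (f x + a / (B + a) * g (v - x)
          + L / 2 * ((a / (B + a)) ^ 2 * ‖v - x‖ ^ 2)) := by
        gcongr
        linarith
    _ = (B + a) * f x + a * g (v - x) + L * a ^ 2 / (2 * (B + a)) * ‖v - x‖ ^ 2 := by
        field_simp

theorem composite_weightedAverage_le {Φ : Type*} [FunLike Φ E ℝ] [LinearMapClass Φ ℝ E ℝ]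
    {g : Φ} {C : Set E} {ψ : E → ℝ} (hψ : ConvexOn ℝ C ψ) (hx : x ∈ C) (hv : v ∈ C)
    (ha : 0 ≤ a) (hB : 0 ≤ B) (hBa : 0 < B + a) {y : E}
    (hy : y = (B / (B + a)) • x + (a / (B + a)) • v)
    (hf : f y - f x - g (y - x) ≤ L / 2 * ‖x - y‖ ^ 2) :
    (B + a) * (f y + ψ y) - B * (f x + ψ x) - a * (f x + g (v - x) + ψ v)
      ≤ L * a ^ 2 / (2 * (B + a)) * ‖v - x‖ ^ 2 := by
  have hfy := mul_weightedAverage_le_of_quadratic_upper_bound hBa hy hf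
  have hψy := mul_weightedAverage_le_of_convexOn hψ hx hv ha hB hBa
  rw [← hy] at hψy
  linarith

end AveragingStep

section WeightedAverages

open Finset

variable {E : Type*} {a : ℕ → ℝ}

theorem sum_range_succ_pos_of_zero_pos (ha₀ : 0 < a 0) (ha : ∀ t, 0 ≤ a t) (t : ℕ) :
    0 < ∑ ℓ ∈ range (t + 1), a ℓ :=
  sum_pos' (fun ℓ _ => ha ℓ) ⟨0, by simp, ha₀⟩

/-- The Frank-Wolfe averaging recursion `x_{t+1} = (A_{t-1} / A_t) x_t + (a_t / A_t) v_t`. Here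
`A_{t-1}` is the sum of the weights over `range t`, so that `A_{-1} = 0` and the case `t = 0`
reads `x_1 = v_0`. -/
def IsWeightedAverageSeq [AddCommGroup E] [Module ℝ E] (a : ℕ → ℝ) (x v : ℕ → E) : Prop :=
  ∀ t, x (t + 1) = ((∑ ℓ ∈ range t, a ℓ) / ∑ ℓ ∈ range (t + 1), a ℓ) • x t
    + (a t / ∑ ℓ ∈ range (t + 1), a ℓ) • v t

theorem IsWeightedAverageSeq.mem_of_convex [AddCommGroup E] [Module ℝ E] {x v : ℕ → E}
    (hxv : IsWeightedAverageSeq a x v) (ha₀ : 0 < a 0) (ha : ∀ t, 0 ≤ a t) {C : Set E}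
    (hC : Convex ℝ C) (hx₀ : x 0 ∈ C) (hv : ∀ t, v t ∈ C) (t : ℕ) : x t ∈ C := by
  induction t with
  | zero => exact hx₀
  | succ t ih =>
    have hpos := sum_range_succ_pos_of_zero_pos ha₀ ha t
    rw [hxv t]
    rw [sum_range_succ] at hpos ⊢
    exact convex_iff_div.mp hC ih (hv t) (sum_nonneg fun ℓ _ => ha ℓ) (ha t) hpos

/-- The gap multiplied by the total weight: `cumulativeGap a F m t` is `A_{t-1} G_{t-1}`, where
`F t` is the objective value at `x_t` and the weighted average of `m_0, …, m_{t-1}` is the lower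
bound. The index is shifted by one, so that `A_{-1} G_{-1} = 0` is an empty sum. -/
noncomputable def cumulativeGap (a F m : ℕ → ℝ) (t : ℕ) : ℝ :=
  ∑ ℓ ∈ range t, a ℓ * (F t - m ℓ)

theorem cumulativeGap_zero (a F m : ℕ → ℝ) : cumulativeGap a F m 0 = 0 := sum_range_zero _

theorem cumulativeGap_eq_sub (a F m : ℕ → ℝ) (t : ℕ) :
    cumulativeGap a F m t = (∑ ℓ ∈ range t, a ℓ) * F t - ∑ ℓ ∈ range t, a ℓ * m ℓ := by
  simp only [cumulativeGap, mul_sub, sum_sub_distrib, sum_mul]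

theorem cumulativeGap_succ_sub (a F m : ℕ → ℝ) (t : ℕ) :
    cumulativeGap a F m (t + 1) - cumulativeGap a F m t
      = (∑ ℓ ∈ range t, a ℓ + a t) * F (t + 1) - (∑ ℓ ∈ range t, a ℓ) * F t - a t * m t := by
  simp only [cumulativeGap_eq_sub, sum_range_succ]
  ring

theorem mul_eq_cumulativeGap_succ {F m : ℕ → ℝ} {t : ℕ} {A G : ℝ}
    (hA : A = ∑ ℓ ∈ range (t + 1), a ℓ) (hA₀ : ∑ ℓ ∈ range (t + 1), a ℓ ≠ 0)
    (hG : G = F (t + 1) - (1 / A) * ∑ ℓ ∈ range (t + 1), a ℓ * m ℓ) :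
    A * G = cumulativeGap a F m (t + 1) := by
  rw [← hA] at hA₀
  rw [cumulativeGap_eq_sub, ← hA, hG, mul_sub, ← mul_assoc, mul_one_div_cancel hA₀, one_mul]

theorem IsWeightedAverageSeq.cumulativeGap_succ_sub_le [SeminormedAddCommGroup E]
    [NormedSpace ℝ E] {x v : ℕ → E} (hxv : IsWeightedAverageSeq a x v) (ha₀ : 0 < a 0)
    (ha : ∀ t, 0 ≤ a t) {C : Set E} {ψ f : E → ℝ} (hψ : ConvexOn ℝ C ψ) {Φ : Type*}
    [FunLike Φ E ℝ] [LinearMapClass Φ ℝ E ℝ] {f' : E → Φ} {L : ℝ}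
    (hf : ∀ y ∈ C, ∀ z ∈ C, f z - f y - f' y (z - y) ≤ L / 2 * ‖y - z‖ ^ 2)
    (hx₀ : x 0 ∈ C) (hv : ∀ t, v t ∈ C) (t : ℕ) :
    cumulativeGap a (fun s => f (x s) + ψ (x s))
          (fun s => f (x s) + f' (x s) (v s - x s) + ψ (v s)) (t + 1)
        - cumulativeGap a (fun s => f (x s) + ψ (x s))
          (fun s => f (x s) + f' (x s) (v s - x s) + ψ (v s)) t
      ≤ L * a t ^ 2 / (2 * ∑ ℓ ∈ range (t + 1), a ℓ) * ‖v t - x t‖ ^ 2 := by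
  have hxC := hxv.mem_of_convex ha₀ ha hψ.1 hx₀ hv
  have hpos := sum_range_succ_pos_of_zero_pos ha₀ ha t
  have hstep := hxv t
  rw [sum_range_succ] at hpos hstep
  rw [cumulativeGap_succ_sub, sum_range_succ]
  exact composite_weightedAverage_le hψ (hxC t) (hv t) (ha t) (sum_nonneg fun ℓ _ => ha ℓ) hpos
    hstep (hf _ (hxC t) _ (hxC (t + 1)))

theorem generalized_fw_per_iteration_bound_general
    [SeminormedAddCommGroup E] [NormedSpace ℝ E] {C : Set E} {ψ f : E → ℝ}
    (hψ : ConvexOn ℝ C ψ) {f' : E → E →L[ℝ] ℝ} {L : ℝ}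
    (hderiv : ∀ z ∈ C, HasFDerivWithinAt f (f' z) C z)
    (hf : ∀ y ∈ C, ∀ z ∈ C, f z - f y - f' y (z - y) ≤ L / 2 * ‖y - z‖ ^ 2)
    {A : ℕ → ℝ} (ha₀ : 0 < a 0) (ha : ∀ t, 0 ≤ a t)
    (hA : ∀ t, A t = ∑ ℓ ∈ range (t + 1), a ℓ)
    {x v : ℕ → E} (hx₀ : x 0 ∈ C) (hv : ∀ t, v t ∈ C) (hx₁ : x 1 = v 0)
    (hx : ∀ t, 1 ≤ t → x (t + 1) = (A (t - 1) / A t) • x t + (a t / A t) • v t)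
    {G : ℕ → ℝ}
    (hG : ∀ t, G t = f (x (t + 1)) + ψ (x (t + 1)) -
      (1 / A t) * ∑ ℓ ∈ range (t + 1), a ℓ * (f (x ℓ) + f' (x ℓ) (v ℓ - x ℓ) + ψ (v ℓ)))
    (t : ℕ) :
    A t * G t - (if t = 0 then 0 else A (t - 1) * G (t - 1))
      ≤ L * a t ^ 2 / (2 * A t) * ‖v t - x t‖ ^ 2 := by
  have hxv : IsWeightedAverageSeq a x v
    | 0 => by simp [hx₁, ha₀.ne']
    | n + 1 => by simpa only [hA, Nat.add_sub_cancel] using hx (n + 1) (Nat.le_add_left 1 n)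
  let F : ℕ → ℝ := fun s => f (x s) + ψ (x s)
  let m : ℕ → ℝ := fun s => f (x s) + f' (x s) (v s - x s) + ψ (v s)
  have hAG : ∀ n, A n * G n = cumulativeGap a F m (n + 1) := fun n =>
    mul_eq_cumulativeGap_succ (hA n) (sum_range_succ_pos_of_zero_pos ha₀ ha n).ne' (hG n)
  have hprev : (if t = 0 then 0 else A (t - 1) * G (t - 1)) = cumulativeGap a F m t := by
    cases t with
    | zero => rw [if_pos rfl, cumulativeGap_zero]
    | succ n => rw [if_neg n.succ_ne_zero, Nat.add_sub_cancel, hAG]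
  rw [hAG, hprev, hA]
  exact hxv.cumulativeGap_succ_sub_le ha₀ ha hψ hf hx₀ hv t

end WeightedAverages

/-- Per-iteration primal-dual bound for generalized Frank-Wolfe:
`A_t G_t - A_{t-1} G_{t-1} ≤ (L a_t²/(2A_t))·‖v_t - x_t‖²`, with the convention
`A_{-1} G_{-1} = 0`. Here `C` is the effective domain of the convex, proper,
lower semi-continuous regularizer `ψ`. -/
theorem generalized_fw_per_iteration_bound
    {E : Type*} [NormedAddCommGroup E] [InnerProductSpace ℝ E] [FiniteDimensional ℝ E]
    (C : Set E) (hCne : C.Nonempty) (hCconv : Convex ℝ C)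
    (ψ : E → ℝ) (hψconv : ConvexOn ℝ C ψ)
    (U : Set E) (hUopen : IsOpen U) (hCU : C ⊆ U)
    (f : E → ℝ) (f' : E → E) (L : ℝ)
    (hgrad : ∀ z ∈ U, HasGradientAt f (f' z) z)
    (hsmooth : ∀ x ∈ U, ∀ y ∈ U,
      0 ≤ f y - f x - ⟪f' x, y - x⟫ ∧
        f y - f x - ⟪f' x, y - x⟫ ≤ L / 2 * ‖x - y‖ ^ 2)
    (a A : ℕ → ℝ) (hapos : ∀ t, 0 < a t)
    (hA : ∀ t, A t = ∑ ℓ ∈ Finset.range (t + 1), a ℓ)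
    (x v : ℕ → E) (hx0 : x 0 ∈ C)
    (hv : ∀ t, v t ∈ C ∧ ∀ w ∈ C, ⟪f' (x t), v t⟫ + ψ (v t) ≤ ⟪f' (x t), w⟫ + ψ w)
    (hx1 : x 1 = v 0)
    (hxrec : ∀ t, 1 ≤ t →
      x (t + 1) = (A (t - 1) / A t) • x t + (a t / A t) • v t)
    (G : ℕ → ℝ)
    (hG : ∀ t, G t = f (x (t + 1)) + ψ (x (t + 1)) -
      (1 / A t) * ∑ ℓ ∈ Finset.range (t + 1),
        a ℓ * (f (x ℓ) + ⟪f' (x ℓ), v ℓ - x ℓ⟫ + ψ (v ℓ))) :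
    ∀ t : ℕ,
      A t * G t - (if t = 0 then 0 else A (t - 1) * G (t - 1))
        ≤ L * a t ^ 2 / (2 * A t) * ‖v t - x t‖ ^ 2 :=
  generalized_fw_per_iteration_bound_general hψconv
    (fun z hz => (hgrad z (hCU hz)).hasFDerivAt.hasFDerivWithinAt)
    (fun y hy z hz => (hsmooth y (hCU hy) z (hCU hz)).2)
    (hapos 0) (fun t => (hapos t).le) hA hx0 (fun t => (hv t).1) hx1 hxrec hG
end

section
/- Let f be μ-strongly convex (μ > 0) and differentiable on the compact convex set X ⊆ ℝ^d with Euclidean diameter D, let x* be the minimizer of f over X, and suppose the closed Euclidean ball of radius r > 0 around x* is contained in X. Then for every x ∈ X and every Frank-Wolfe vertex v ∈ argmin_{w∈X} ⟨∇f(x), w⟩ with v ≠ x, the primal gap is bounded as f(x) − f(x*) ≤ (D²/r²)·⟨∇f(x), x − v⟩²/(2μ‖x − v‖²). -/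
open scoped RealInnerProductSpace

/-!
A linear functional `⟪g, ·⟫` drops by `r * ‖g‖` from the centre `c` of a ball of radius `r` to the
boundary, so its minimizer `v` over any set containing the ball satisfies `r * ‖g‖ ≤ ⟪g, c - v⟫`.
When `f c ≤ f x`, a strong subgradient `g` of `f` at `x` makes an obtuse angle with `c - x`, hence
also `r * ‖g‖ ≤ ⟪g, x - v⟫`. Strong convexity bounds the primal gap by `‖g‖ ^ 2 / (2 * μ)`, and
inserting the bound on `‖g‖` gives the result, up to the factor `(diam X / ‖x - v‖) ^ 2 ≥ 1`.
-/

section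

variable {E : Type*} [NormedAddCommGroup E] [InnerProductSpace ℝ E]
  {X : Set E} {f : E → ℝ} {c g v x y : E} {r μ : ℝ}

theorem exists_mem_closedBall_inner_eq_sub_mul_norm (c g : E) (hr : 0 ≤ r) :
    ∃ w ∈ Metric.closedBall c r, ⟪g, w⟫ = ⟪g, c⟫ - r * ‖g‖ := by
  rcases eq_or_ne g 0 with rfl | hg
  · exact ⟨c, Metric.mem_closedBall_self hr, by simp⟩
  have hg_norm : ‖g‖ ≠ 0 := norm_ne_zero_iff.mpr hg
  refine ⟨c - (r / ‖g‖) • g, ?_, ?_⟩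
  · rw [mem_closedBall_iff_norm, sub_sub_cancel_left, norm_neg,
      norm_smul_of_nonneg (by positivity), div_mul_cancel₀ r hg_norm]
  · rw [inner_sub_right, real_inner_smul_right, real_inner_self_eq_norm_mul_norm, ← mul_assoc,
      div_mul_cancel₀ r hg_norm]

theorem mul_norm_le_inner_sub_of_isMinOn (hv : IsMinOn (fun w ↦ ⟪g, w⟫) X v) (hr : 0 ≤ r)
    (hball : Metric.closedBall c r ⊆ X) : r * ‖g‖ ≤ ⟪g, c - v⟫ := by
  obtain ⟨w, hw, hgw⟩ := exists_mem_closedBall_inner_eq_sub_mul_norm c g hr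
  have hvw : ⟪g, v⟫ ≤ ⟪g, w⟫ := isMinOn_iff.mp hv w (hball hw)
  rw [inner_sub_right]
  linarith

/-- `g` is a `μ`-strong subgradient of `f` at `x` relative to `X`: the affine minorant with slope
`g` at `x`, improved by the quadratic `μ / 2 * ‖y - x‖ ^ 2`, stays below `f` on `X`. For a
differentiable `μ`-strongly convex `f`, the gradient at a point of `X` is one. -/
def IsStrongSubgradientOn (f : E → ℝ) (μ : ℝ) (X : Set E) (x g : E) : Prop :=
  ∀ y ∈ X, f x + ⟪g, y - x⟫ + μ / 2 * ‖y - x‖ ^ 2 ≤ f y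

namespace IsStrongSubgradientOn

theorem inner_sub_le_sub (hg : IsStrongSubgradientOn f μ X x g) (hμ : 0 ≤ μ) (hy : y ∈ X) :
    ⟪g, y - x⟫ ≤ f y - f x := by
  have hquad : 0 ≤ μ / 2 * ‖y - x‖ ^ 2 := by positivity
  linarith [hg y hy]

theorem sub_le_norm_sq_div (hg : IsStrongSubgradientOn f μ X x g) (hμ : 0 < μ) (hy : y ∈ X) :
    f x - f y ≤ ‖g‖ ^ 2 / (2 * μ) := by
  have hcauchy : -(‖g‖ * ‖y - x‖) ≤ ⟪g, y - x⟫ :=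
    neg_le_of_abs_le (abs_real_inner_le_norm g (y - x))
  calc f x - f y ≤ ‖g‖ * ‖y - x‖ - μ / 2 * ‖y - x‖ ^ 2 := by linarith [hg y hy]
    _ = ‖g‖ ^ 2 / (2 * μ) - (‖g‖ - μ * ‖y - x‖) ^ 2 / (2 * μ) := by field_simp; ring
    _ ≤ ‖g‖ ^ 2 / (2 * μ) := sub_le_self _ (by positivity)

theorem sub_le_inner_div_sq_div (hg : IsStrongSubgradientOn f μ X x g) (hμ : 0 < μ) (hr : 0 < r)
    (hball : Metric.closedBall c r ⊆ X) (hv : IsMinOn (fun w ↦ ⟪g, w⟫) X v) :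
    f x - f c ≤ (⟪g, x - v⟫ / r) ^ 2 / (2 * μ) := by
  have hc : c ∈ X := hball (Metric.mem_closedBall_self hr.le)
  rcases le_total (f x) (f c) with hxc | hcx
  · exact (sub_nonpos.mpr hxc).trans (by positivity)
  have hobtuse : ⟪g, c - x⟫ ≤ 0 := (hg.inner_sub_le_sub hμ.le hc).trans (sub_nonpos.mpr hcx)
  have hnorm : ‖g‖ ≤ ⟪g, x - v⟫ / r := by
    rw [le_div_iff₀' hr]
    calc r * ‖g‖ ≤ ⟪g, c - v⟫ := mul_norm_le_inner_sub_of_isMinOn hv hr.le hball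
      _ = ⟪g, c - x⟫ + ⟪g, x - v⟫ := by rw [← inner_add_right, sub_add_sub_cancel]
      _ ≤ ⟪g, x - v⟫ := add_le_of_nonpos_left hobtuse
  calc f x - f c ≤ ‖g‖ ^ 2 / (2 * μ) := hg.sub_le_norm_sq_div hμ hc
    _ ≤ (⟪g, x - v⟫ / r) ^ 2 / (2 * μ) := by gcongr

end IsStrongSubgradientOn

theorem strongly_convex_interior_primal_gap_bound_general (hX : Bornology.IsBounded X)
    (hμ : 0 < μ) (hx : x ∈ X) (hg : IsStrongSubgradientOn f μ X x g)
    (hr : 0 < r) (hball : Metric.closedBall c r ⊆ X)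
    (hv : v ∈ X) (hvmin : IsMinOn (fun w ↦ ⟪g, w⟫) X v) (hvx : v ≠ x) :
    f x - f c ≤ (Metric.diam X) ^ 2 / r ^ 2 *
      (⟪g, x - v⟫ ^ 2 / (2 * μ * ‖x - v‖ ^ 2)) := by
  have hdist : 0 < ‖x - v‖ := norm_sub_pos_iff.mpr hvx.symm
  have hdiam : ‖x - v‖ ≤ Metric.diam X :=
    dist_eq_norm x v ▸ Metric.dist_le_diam_of_mem hX hx hv
  calc f x - f c ≤ (⟪g, x - v⟫ / r) ^ 2 / (2 * μ) :=
        hg.sub_le_inner_div_sq_div hμ hr hball hvmin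
    _ = ‖x - v‖ ^ 2 / r ^ 2 * (⟪g, x - v⟫ ^ 2 / (2 * μ * ‖x - v‖ ^ 2)) := by field_simp
    _ ≤ (Metric.diam X) ^ 2 / r ^ 2 * (⟪g, x - v⟫ ^ 2 / (2 * μ * ‖x - v‖ ^ 2)) := by gcongr

end

/-- Primal gap bound for strongly convex `f` when the optimum lies in the relative
interior: combining the strong-convexity bound with the Guélat–Marcotte scaling
inequality, `f(x) - f(x*) ≤ (D²/r²)·⟪∇f(x), x - v⟫²/(2μ‖x - v‖²)` for every
Frank-Wolfe vertex `v ≠ x`, where `D` is the Euclidean diameter of `X`. -/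
theorem strongly_convex_interior_primal_gap_bound
    {d : ℕ}
    (X : Set (EuclideanSpace ℝ (Fin d))) (hXcompact : IsCompact X) (hXconv : Convex ℝ X)
    (f : EuclideanSpace ℝ (Fin d) → ℝ)
    (f' : EuclideanSpace ℝ (Fin d) → EuclideanSpace ℝ (Fin d))
    (hgrad : ∀ z ∈ X, HasGradientAt f (f' z) z)
    (μ : ℝ) (hμ : 0 < μ)
    (hstrong : ∀ x ∈ X, ∀ y ∈ X,
      f x + ⟪f' x, y - x⟫ + μ / 2 * ‖y - x‖ ^ 2 ≤ f y)
    (xs : EuclideanSpace ℝ (Fin d)) (hxs : xs ∈ X) (hxsmin : ∀ z ∈ X, f xs ≤ f z)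
    (r : ℝ) (hr : 0 < r) (hball : Metric.closedBall xs r ⊆ X) :
    ∀ x ∈ X, ∀ v ∈ X, (∀ w ∈ X, ⟪f' x, v⟫ ≤ ⟪f' x, w⟫) → v ≠ x →
      f x - f xs ≤ (Metric.diam X) ^ 2 / r ^ 2 *
        (⟪f' x, x - v⟫ ^ 2 / (2 * μ * ‖x - v‖ ^ 2)) := by
  intro x hx v hv hvmin hvx
  exact strongly_convex_interior_primal_gap_bound_general hXcompact.isBounded hμ hx (hstrong x hx)
    hr hball hv (isMinOn_iff.mpr hvmin) hvx
end
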